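/- arXiv:1609.06288 — 5 statements merged into one kernel-verified Lean document; each statement's English description precedes it below -/
import Mathlib

section
/- Let A and B be two nontrivial, finitely generated groups. There exists no left-invariant linear order on the free product G = A * B whose positive cone is represented by a regular language; i.e., for every left-invariant linear order ≤ on G, every finite alphabet X, every surjective monoid homomorphism φ : X* → G, and every language L ⊆ X* with φ(L) = {g ∈ G : 1 < g}, the language L is not regular. -/
/-- The image in the group `G` of a language `L` over `X` under a monoid
homomorphism `φ : X* → G`. -/
def langImage {X G : Type} [Monoid G] (φ : FreeMonoid X →* G) (L : Language X) : Set G :=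
  (fun w => φ (FreeMonoid.ofList w)) '' L

/-!
Call a subset `E` of a group almost invariant if only finitely many elements enter or leave it
under right translation by each fixed element. Suppose that a left order has a regular positive
cone, and that both `E` and its complement are unbounded above. For `p < k` with `p ∉ E` and
`k ∈ E`, a word of the language representing `p⁻¹ * k` labels a path from `p` to `k`, which enters
`E` at one of finitely many places `c`. Since the automaton has finitely many states, the prefix
leading to `c` can be completed to a word of the language by one of finitely many words `t`. The
completed word is positive, so `p < c * t`, although `p` can be chosen above all these products.

In a free product, the elements whose reduced word starts in a given factor form an almost
invariant set: right multiplication by a letter changes the factor in which the reduced word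
starts only by leaving or reaching `1`. This set is unbounded above, because multiplication on the
left by a nontrivial element of the factor maps its complement into it. Since two such sets for
different factors are disjoint, the complement is unbounded as well.
-/

open Monoid

theorem exists_finite_completions {X : Type*} {L : Language X} (hL : L.IsRegular) :
    ∃ T : Set (List X), T.Finite ∧ ∀ u v, u ++ v ∈ L → ∃ t ∈ T, u ++ t ∈ L := by
  choose! c hc using fun (K : Language X) (hK : ∃ v, v ∈ K) => hK
  exact ⟨c '' Set.range L.leftQuotient, hL.finite_range_leftQuotient.image c,
    fun u v huv => ⟨_, Set.mem_image_of_mem c ⟨u, rfl⟩, hc (L.leftQuotient u) ⟨v, huv⟩⟩⟩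

section AlmostInvariant

/-- The elements outside `E` that right translation by `s` carries into `E`. For a generator `s`,
these are the origins of the `s`-labelled edges of the Cayley graph that enter `E`. -/
def entryBoundary {G : Type*} [Mul G] (E : Set G) (s : G) : Set G :=
  {y | y ∉ E ∧ y * s ∈ E}

/-- Almost invariant sets, as in the theory of ends of groups: `E` differs from each of its right
translates by a finite set. In a group it is enough to count the edges entering `E`, since an edge
leaving `E` along `s` is an edge entering `E` along `s⁻¹`. -/
def IsAlmostInvariant {G : Type*} [Mul G] (E : Set G) : Prop :=
  ∀ s, (entryBoundary E s).Finite

theorem entryBoundary_one {G : Type*} [MulOneClass G] (E : Set G) : entryBoundary E 1 = ∅ :=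
  Set.eq_empty_of_forall_notMem fun y hy => hy.1 (mul_one y ▸ hy.2)

theorem entryBoundary_mul_subset {G : Type*} [Semigroup G] (E : Set G) (s t : G) :
    entryBoundary E (s * t) ⊆ entryBoundary E s ∪ (· * s) ⁻¹' entryBoundary E t := by
  rintro y ⟨hy, hyst⟩
  rw [← mul_assoc] at hyst
  by_cases hys : y * s ∈ E
  · exact Or.inl ⟨hy, hys⟩
  · exact Or.inr ⟨hys, hyst⟩

theorem finite_entryBoundary_mul {G : Type*} [Semigroup G] [IsRightCancelMul G] {E : Set G}
    {s t : G} (hs : (entryBoundary E s).Finite) (ht : (entryBoundary E t).Finite) :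
    (entryBoundary E (s * t)).Finite :=
  (hs.union (ht.preimage (mul_left_injective s).injOn)).subset (entryBoundary_mul_subset E s t)

theorem IsAlmostInvariant.preimage {G H : Type*} [Mul G] [Mul H] {E : Set H}
    (hE : IsAlmostInvariant E) (f : G →ₙ* H) (hf : Function.Injective f) :
    IsAlmostInvariant (f ⁻¹' E) := fun s =>
  ((hE (f s)).preimage hf.injOn).subset fun y ⟨hy, hys⟩ => ⟨hy, map_mul f y s ▸ hys⟩

theorem exists_prefix_mem_entryBoundary {X G : Type*} [Monoid G] (φ : FreeMonoid X →* G)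
    {E : Set G} {y : G} (hy : y ∉ E) {w : List X} (hw : y * φ (FreeMonoid.ofList w) ∈ E) :
    ∃ u x v, w = u ++ x :: v ∧
      y * φ (FreeMonoid.ofList u) ∈ entryBoundary E (φ (FreeMonoid.of x)) := by
  induction w using List.reverseRecOn with
  | nil => exact absurd (by simpa using hw) hy
  | append_singleton u x ih =>
    by_cases hu : y * φ (FreeMonoid.ofList u) ∈ E
    · obtain ⟨u', x', v, rfl, hmem⟩ := ih hu
      exact ⟨u', x', v ++ [x], by simp, hmem⟩
    · refine ⟨u, x, [], rfl, hu, ?_⟩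
      rwa [FreeMonoid.ofList_append, FreeMonoid.ofList_singleton, map_mul, ← mul_assoc] at hw

end AlmostInvariant

section LeftOrder

variable {G : Type*} [Group G] [LinearOrder G] [MulLeftMono G]

theorem noMaxOrder_of_mulLeftMono [Nontrivial G] : NoMaxOrder G := by
  obtain ⟨z, hz⟩ : ∃ z : G, 1 < z := by
    obtain ⟨a, ha⟩ := exists_ne (1 : G)
    exact ha.lt_or_gt.elim (fun h => ⟨a⁻¹, Left.one_lt_inv_iff.2 h⟩) fun h => ⟨a, h⟩
  exact ⟨fun g => ⟨g * z, lt_mul_of_one_lt_right' g hz⟩⟩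

theorem not_bddAbove_of_mapsTo_compl [Nontrivial G] {S : Set G} {a : G}
    (ha : Set.MapsTo (a * ·) Sᶜ S) : ¬ BddAbove S := by
  rintro ⟨m, hm⟩
  have : NoMaxOrder G := noMaxOrder_of_mulLeftMono
  obtain ⟨g, hg⟩ := exists_gt (max m (a⁻¹ * m))
  obtain ⟨hmg, hamg⟩ := max_lt_iff.1 hg
  have hgS : g ∉ S := fun h => (hm h).not_gt hmg
  exact (hm (ha hgS)).not_gt (inv_mul_lt_iff_lt_mul.1 hamg)

theorem not_isRegular_of_isAlmostInvariant {E : Set G} (hE : IsAlmostInvariant E)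
    (hEub : ¬ BddAbove E) (hEcub : ¬ BddAbove Eᶜ) {X : Type*} [Finite X]
    (φ : FreeMonoid X →* G) {L : Language X}
    (hL : (fun w => φ (FreeMonoid.ofList w)) '' L = {g | 1 < g}) : ¬ L.IsRegular := by
  intro hreg
  have pos_iff (g : G) : 1 < g ↔ ∃ w ∈ L, φ (FreeMonoid.ofList w) = g :=
    (Set.ext_iff.1 hL g).symm
  obtain ⟨T, hTfin, hT⟩ := exists_finite_completions hreg
  have hfin : (⋃ x, entryBoundary E (φ (FreeMonoid.of x))).Finite :=
    Set.finite_iUnion fun x => hE _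
  obtain ⟨m, hm⟩ :=
    (hfin.image2 (fun c t => c * φ (FreeMonoid.ofList t)) hTfin).bddAbove
  obtain ⟨p, hp, hmp⟩ := not_bddAbove_iff.1 hEcub m
  obtain ⟨k, hk, hpk⟩ := not_bddAbove_iff.1 hEub p
  obtain ⟨w, hwL, hw⟩ := (pos_iff (p⁻¹ * k)).1 (lt_inv_mul_iff_mul_lt.2 (by rwa [mul_one]))
  obtain ⟨u, x, v, rfl, hu⟩ :=
    exists_prefix_mem_entryBoundary φ hp (w := w) (by rwa [hw, mul_inv_cancel_left])
  obtain ⟨t, htT, htL⟩ := hT u _ hwL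
  have hle : p * φ (FreeMonoid.ofList u) * φ (FreeMonoid.ofList t) ≤ m :=
    hm (Set.mem_image2_of_mem (Set.mem_iUnion_of_mem x hu) htT)
  have hlt : p < p * φ (FreeMonoid.ofList u) * φ (FreeMonoid.ofList t) := by
    rw [mul_assoc, ← map_mul, ← FreeMonoid.ofList_append]
    exact lt_mul_of_one_lt_right' p ((pos_iff _).2 ⟨_, htL, rfl⟩)
  exact (hmp.trans hlt).not_ge hle

end LeftOrder

section FirstLetter

variable {ι : Type*} {M : ι → Type*} [∀ i, Monoid (M i)]

variable (M) in
/-- The elements of a free product whose reduced word starts with a letter from `M i`. -/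
def startingIn (i : ι) : Set (CoprodI M) :=
  CoprodI.Word.prod '' {w | w.fstIdx = some i}

theorem prod_mem_startingIn {i : ι} {w : CoprodI.Word M} :
    w.prod ∈ startingIn M i ↔ w.fstIdx = some i := by
  classical
  exact Function.Injective.mem_set_image CoprodI.Word.equiv.symm.injective

theorem exists_word_prod_eq (g : CoprodI M) : ∃ w : CoprodI.Word M, w.prod = g := by
  classical
  exact CoprodI.Word.equiv.symm.surjective g

theorem one_notMem_startingIn (i : ι) : (1 : CoprodI M) ∉ startingIn M i := by
  rw [← CoprodI.Word.prod_empty, prod_mem_startingIn]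
  simp [CoprodI.Word.fstIdx]

theorem eq_of_mem_startingIn {i j : ι} {g : CoprodI M} (hi : g ∈ startingIn M i)
    (hj : g ∈ startingIn M j) : i = j := by
  obtain ⟨w, hw, rfl⟩ := hi
  exact Option.some_injective _ (hw.symm.trans (prod_mem_startingIn.1 hj))

theorem of_mul_mem_startingIn {i : ι} {m : M i} (hm : m ≠ 1) {g : CoprodI M}
    (hg : g ∉ startingIn M i) : CoprodI.of m * g ∈ startingIn M i := by
  obtain ⟨w, rfl⟩ := exists_word_prod_eq g
  have hw : w.fstIdx ≠ some i := fun h => hg (prod_mem_startingIn.2 h)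
  rw [← CoprodI.Word.prod_cons i m w hm hw]
  exact prod_mem_startingIn.2 (CoprodI.Word.fstIdx_cons m w hw hm)

theorem eq_of_of_mem_startingIn {i j : ι} {s : M j} (hs : CoprodI.of s ∈ startingIn M i) :
    j = i := by
  have hs1 : s ≠ 1 := by
    rintro rfl
    exact one_notMem_startingIn i (map_one (CoprodI.of (M := M)) ▸ hs)
  exact eq_of_mem_startingIn (mul_one (CoprodI.of s) ▸
    of_mul_mem_startingIn hs1 (one_notMem_startingIn j)) hs

theorem entryBoundary_startingIn_of_subset (i : ι) {j : ι} (s : M j) :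
    entryBoundary (startingIn M i) (CoprodI.of s) ⊆ {1} := by
  rintro g ⟨hg, hgs⟩
  obtain ⟨w, rfl⟩ := exists_word_prod_eq g
  induction w using CoprodI.Word.consRecOn generalizing i with
  | empty => rfl
  | cons k m w hwk hm ih =>
    have hw : w.prod ∉ startingIn M k := fun h => hwk (prod_mem_startingIn.1 h)
    rw [CoprodI.Word.prod_cons] at hg hgs
    have hki : k ≠ i := by
      rintro rfl
      exact hg (of_mul_mem_startingIn hm hw)
    rw [mul_assoc] at hgs
    -- The letter `m` survives in `m * (w * s)` unless `w * s` starts in `M k` as well.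
    have hws : w.prod * CoprodI.of s ∈ startingIn M k := by
      by_contra hws
      exact hki (eq_of_mem_startingIn (of_mul_mem_startingIn hm hws) hgs)
    have hw1 : w.prod = 1 := ih k hw hws
    rw [hw1, one_mul] at hgs hws
    obtain rfl : j = k := eq_of_of_mem_startingIn hws
    rw [← map_mul] at hgs
    exact absurd (eq_of_of_mem_startingIn hgs) hki

theorem isAlmostInvariant_startingIn {G : ι → Type*} [∀ i, Group (G i)] (i : ι) :
    IsAlmostInvariant (startingIn G i) := by
  intro s
  induction s using CoprodI.induction_on with
  | one => exact entryBoundary_one (startingIn G i) ▸ Set.finite_empty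
  | of j s => exact (Set.finite_singleton 1).subset (entryBoundary_startingIn_of_subset i s)
  | mul s t hs ht => exact finite_entryBoundary_mul hs ht

end FirstLetter

section Coprod

universe u

/-- The two-member family `A, B`, through which a binary free product becomes an indexed one. -/
def pairFamily (A B : Type u) : Bool → Type u
  | true => A
  | false => B

variable (A B : Type u)

instance [Group A] [Group B] : ∀ i, Group (pairFamily A B i)
  | true => inferInstanceAs (Group A)
  | false => inferInstanceAs (Group B)

instance [Nontrivial A] [Nontrivial B] : ∀ i, Nontrivial (pairFamily A B i)
  | true => inferInstanceAs (Nontrivial A)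
  | false => inferInstanceAs (Nontrivial B)

variable [Group A] [Group B]

/-- The inclusions of the two factors into `A ∗ B`. -/
def pairInclusion : ∀ i, pairFamily A B i →* Coprod A B
  | true => (Coprod.inl : A →* Coprod A B)
  | false => (Coprod.inr : B →* Coprod A B)

/-- The binary free product as a free product indexed by `Bool`. -/
def coprodEquivCoprodI : Coprod A B ≃* CoprodI (pairFamily A B) :=
  MonoidHom.toMulEquiv
    (Coprod.lift (CoprodI.of (M := pairFamily A B) (i := true))
      (CoprodI.of (M := pairFamily A B) (i := false)))
    (CoprodI.lift (pairInclusion A B))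
    (Coprod.hom_ext
      (MonoidHom.ext fun a => CoprodI.lift_of (pairInclusion A B) (i := true) a)
      (MonoidHom.ext fun b => CoprodI.lift_of (pairInclusion A B) (i := false) b))
    (CoprodI.ext_hom _ _ fun i => by cases i <;> rfl)

end Coprod

section FreeProduct

variable {ι : Type*} {M : ι → Type*} [∀ i, Group (M i)] {G : Type*} [Group G] [LinearOrder G]
  [MulLeftMono G]

theorem not_bddAbove_preimage_startingIn (e : G ≃* CoprodI M) (i : ι)
    [Nontrivial (M i)] : ¬ BddAbove (e ⁻¹' startingIn M i) := by
  obtain ⟨m, hm⟩ := exists_ne (1 : M i)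
  have : Nontrivial G := (e.symm.injective.comp (CoprodI.of_injective i)).nontrivial
  refine not_bddAbove_of_mapsTo_compl (a := e.symm (CoprodI.of m)) fun g hg => ?_
  simpa only [Set.mem_preimage, map_mul, e.apply_symm_apply] using of_mul_mem_startingIn hm hg

theorem no_regular_positive_cone_in_free_product_general (e : G ≃* CoprodI M)
    {i j : ι} (hij : i ≠ j) [Nontrivial (M i)] [Nontrivial (M j)] {X : Type*} [Finite X]
    (φ : FreeMonoid X →* G) {L : Language X}
    (hL : (fun w => φ (FreeMonoid.ofList w)) '' L = {g | 1 < g}) : ¬ L.IsRegular := by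
  have hE : IsAlmostInvariant (e ⁻¹' startingIn M i) :=
    (isAlmostInvariant_startingIn i).preimage (e : G →ₙ* CoprodI M) e.injective
  have hsub : e ⁻¹' startingIn M j ⊆ (e ⁻¹' startingIn M i)ᶜ :=
    fun _ hj hi => hij (eq_of_mem_startingIn hi hj)
  exact not_isRegular_of_isAlmostInvariant hE (not_bddAbove_preimage_startingIn e i)
    (fun h => not_bddAbove_preimage_startingIn e j (h.mono hsub)) φ hL

end FreeProduct

/-- **No positive cone in a free product is regular.**
Let `A` and `B` be nontrivial, finitely generated groups.  For every left-invariant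
linear order on `G = A ∗ B`, every finite alphabet `X`, every surjective monoid
homomorphism `φ : X* → G`, and every language `L ⊆ X*` representing the positive
cone `{g : 1 < g}`, the language `L` is not regular. -/
theorem no_regular_positive_cone_in_free_product
    {A B : Type} [Group A] [Group B] [Nontrivial A] [Nontrivial B]
    (hA : Group.FG A) (hB : Group.FG B)
    (lin : LinearOrder (Monoid.Coprod A B))
    (hlin : ∀ h g g' : Monoid.Coprod A B, lin.le g g' → lin.le (h * g) (h * g'))
    {X : Type} [Fintype X]
    (φ : FreeMonoid X →* Monoid.Coprod A B) (hφ : Function.Surjective φ)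
    (L : Language X)
    (hL : langImage φ L = {g : Monoid.Coprod A B | lin.lt 1 g}) :
    ¬ L.IsRegular := by
  have : MulLeftMono (Coprod A B) := ⟨fun h g g' => hlin h g g'⟩
  exact no_regular_positive_cone_in_free_product_general (coprodEquivCoprodI A B)
    Bool.false_ne_true φ hL
end

section
/- Let G be a finitely generated group with a left-invariant linear order ≤, let X be a finite alphabet, let φ : X* → G be a surjective monoid homomorphism, and let L ⊆ X* be a language with φ(L) = G₊ = {g ∈ G : 1 < g}. Let Pref(L) denote the set of all prefixes of words in L. If there exists a set T ⊆ G₊ of positive elements that is unbounded from above with respect to ≤ (i.e., for every g ∈ G there is t ∈ T with g < t) and such that T⁻¹ = {t⁻¹ : t ∈ T} ⊆ φ(Pref(L)), then L is not regular. -/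
/-- `Pref L`: the language of all prefixes of words in `L`. -/
def Pref {X : Type} (L : Language X) : Language X :=
  {u | ∃ v : List X, u ++ v ∈ L}

/-!
If `L` is regular, finitely many words `v` suffice to complete every prefix `u` of `L` to a word
`u ++ v` of `L`. If moreover `φ(L)` consists of elements `≥ 1`, then `1 ≤ φ(u) φ(v)`, that is,
`φ(u)⁻¹ ≤ φ(v)`, so an upper bound of the finitely many `φ(v)` bounds all the inverses `φ(u)⁻¹`.
-/

theorem exists_finite_completions_of_isRegular {α : Type*} {L : Language α} (hL : L.IsRegular) :
    ∃ C : Set (List α), C.Finite ∧ ∀ u v, u ++ v ∈ L → ∃ w ∈ C, u ++ w ∈ L := by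
  let completion (K : Language α) : List α := Classical.epsilon (· ∈ K)
  refine ⟨completion '' Set.range L.leftQuotient, hL.finite_range_leftQuotient.image _, ?_⟩
  intro u v huv
  have completion_mem : completion (L.leftQuotient u) ∈ L.leftQuotient u :=
    Classical.epsilon_spec ⟨v, huv⟩
  exact ⟨_, Set.mem_image_of_mem _ (Set.mem_range_self u), completion_mem⟩

section BoundedInverses

open scoped Pointwise

variable {G X : Type} [Group G] [Preorder G] [IsDirectedOrder G] [MulLeftMono G]
  {φ : FreeMonoid X →* G} {L : Language X}

theorem bddAbove_inv_langImage_pref (hreg : L.IsRegular) (hL : langImage φ L ⊆ Set.Ici 1) :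
    BddAbove (langImage φ (Pref L))⁻¹ := by
  obtain ⟨C, hC, hcompl⟩ := exists_finite_completions_of_isRegular hreg
  obtain ⟨b, hb⟩ : BddAbove ((φ ∘ FreeMonoid.ofList) '' C) := (hC.image _).bddAbove
  refine ⟨b, ?_⟩
  rintro g ⟨u, ⟨v, huv⟩, hu : φ (FreeMonoid.ofList u) = g⁻¹⟩
  obtain ⟨w, hw, huw⟩ := hcompl u v huv
  have one_le : 1 ≤ g⁻¹ * φ (FreeMonoid.ofList w) := by
    rw [← hu, ← map_mul, ← FreeMonoid.ofList_append]
    exact hL (Set.mem_image_of_mem _ huw)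
  calc
    g ≤ φ (FreeMonoid.ofList w) := le_inv_mul_iff_le.mp one_le
    _ ≤ b := hb (Set.mem_image_of_mem _ hw)

theorem not_regular_of_unbounded_inverses_in_prefixes_general (hL : langImage φ L ⊆ Set.Ici 1)
    {T : Set G} (hT : ¬ BddAbove T) (hTinv : T⁻¹ ⊆ langImage φ (Pref L)) : ¬ L.IsRegular :=
  fun hreg => hT ((bddAbove_inv_langImage_pref hreg hL).mono (Set.inv_subset.mp hTinv))

end BoundedInverses

/-- If `(G, ≤)` is a finitely generated left-ordered group, `L` is a language
representing the positive cone, and there is a set `T` of positive elements,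
unbounded from above, with `T⁻¹ ⊆ φ(Pref L)`, then `L` is not regular. -/
theorem not_regular_of_unbounded_inverses_in_prefixes
    {G : Type} [Group G] (hG : Group.FG G)
    (lin : LinearOrder G)
    (hlin : ∀ h g g' : G, lin.le g g' → lin.le (h * g) (h * g'))
    {X : Type} [Fintype X]
    (φ : FreeMonoid X →* G) (hφ : Function.Surjective φ)
    (L : Language X)
    (hL : langImage φ L = {g : G | lin.lt 1 g})
    (T : Set G)
    (hTpos : T ⊆ {g : G | lin.lt 1 g})
    (hTunb : ∀ g : G, ∃ t ∈ T, lin.lt g t)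
    (hTinv : (fun t : G => t⁻¹) '' T ⊆ langImage φ (Pref L)) :
    ¬ L.IsRegular := by
  have : MulLeftMono G := ⟨hlin⟩
  exact not_regular_of_unbounded_inverses_in_prefixes_general
    (hL.trans_subset Set.Ioi_subset_Ici_self) (not_bddAbove_iff.mpr hTunb)
    (Set.image_inv_eq_inv.symm.trans_subset hTinv)
end

section
/- (Benois' Lemma) Let Y be a finite set, let X = Y ⊔ Y⁻¹ be the corresponding group alphabet, let G be a group, and let φ : X* → G be a surjective monoid homomorphism satisfying φ(x⁻¹) = φ(x)⁻¹ for all x ∈ X. If L ⊆ X* is a regular language with φ(L) = S ⊆ G, then the language L' consisting of the freely reduced forms of the words in L is a regular language contained in the set of freely reduced words over X, and φ(L') = S. -/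
/-!
Cancellation in a word never crosses a cut of its outcome: if `u` reduces to `v₁ ++ v₂`, then
`u = u₁ ++ u₂` with each `uᵢ` reducing to `vᵢ`. Hence an automaton for `L`, given a transition
labelled `a` along every word reducing to `a` and an initial state at the end of every word
reducing to the empty one, accepts exactly the words to which words of `L` reduce.
The reduced forms of words of `L` are the reduced words among these, and over a finite alphabet
being reduced is a condition on consecutive letters that an automaton remembering one letter checks.
-/

open FreeGroup (IsReduced Red reduce)

variable {α σ : Type*}

theorem isRegular_accepts [Finite σ] (M : NFA α σ) : M.accepts.IsRegular :=
  Language.isRegular_iff.2 ⟨Set σ, Fintype.ofFinite _, M.toDFA, M.toDFA_correct⟩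

section ChainNFA

variable (R : α → α → Prop)

/-- The automaton accepting the words whose consecutive letters are related by `R`. Its state is
the last letter read, with `none` before any letter has been read. -/
def chainNFA : NFA α (Option α) where
  step s b := {t | t = some b ∧ ∀ a ∈ s, R a b}
  start := {none}
  accept := Set.univ

theorem mem_eval_chainNFA {w : List α} {s : Option α} :
    s ∈ (chainNFA R).eval w ↔ s = w.getLast? ∧ w.IsChain R := by
  induction w using List.reverseRecOn generalizing s with
  | nil => simp [chainNFA]
  | append_singleton w b ih =>
    rw [NFA.eval_append_singleton, NFA.mem_stepSet, List.getLast?_concat, List.isChain_append]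
    simp only [ih, List.head?_cons, List.isChain_singleton, Option.mem_some_iff, forall_eq',
      true_and]
    constructor
    · rintro ⟨_, ⟨rfl, hw⟩, rfl, hb⟩
      exact ⟨rfl, hw, hb⟩
    · rintro ⟨rfl, hw, hb⟩
      exact ⟨_, ⟨rfl, hw⟩, rfl, hb⟩

theorem accepts_chainNFA : (chainNFA R).accepts = {w | w.IsChain R} := by
  ext w
  change (∃ s ∈ Set.univ, s ∈ (chainNFA R).eval w) ↔ w.IsChain R
  simp [mem_eval_chainNFA]

theorem isRegular_setOf_isChain [Finite α] :
    Language.IsRegular ({w | w.IsChain R} : Language α) :=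
  accepts_chainNFA R ▸ isRegular_accepts _

end ChainNFA

/-- The saturation of `M` in Benois' construction: a transition labelled `a` joins two states
whenever `M` joins them along some word that reduces to `a`. Words reducing to the empty word
are absorbed into the set of initial states, so no `ε`-transitions are needed. -/
def redSaturation (M : DFA (α × Bool) σ) : NFA (α × Bool) σ where
  step s a := {t | ∃ u, Red u [a] ∧ M.evalFrom s u = t}
  start := {t | ∃ u, Red u [] ∧ M.eval u = t}
  accept := M.accept

/-- The language of all words, reduced or not, that arise from words of `L` by cancellation. -/
def redClosure (L : Language (α × Bool)) : Language (α × Bool) :=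
  {v | ∃ u ∈ L, Red u v}

theorem mem_eval_redSaturation {M : DFA (α × Bool) σ} {v : List (α × Bool)} {t : σ} :
    t ∈ (redSaturation M).eval v ↔ ∃ u, Red u v ∧ M.eval u = t := by
  induction v using List.reverseRecOn generalizing t with
  | nil => rfl
  | append_singleton v a ih =>
    rw [NFA.eval_append_singleton, NFA.mem_stepSet]
    constructor
    · rintro ⟨s, hs, u₂, hu₂, rfl⟩
      obtain ⟨u₁, hu₁, rfl⟩ := ih.1 hs
      exact ⟨u₁ ++ u₂, hu₁.append_append hu₂, M.evalFrom_of_append _ _ _⟩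
    · rintro ⟨u, hu, rfl⟩
      obtain ⟨u₁, u₂, rfl, hu₁, hu₂⟩ := Red.to_append_iff.1 hu
      exact ⟨M.eval u₁, ih.2 ⟨u₁, hu₁, rfl⟩, u₂, hu₂, (M.evalFrom_of_append _ _ _).symm⟩

theorem accepts_redSaturation (M : DFA (α × Bool) σ) :
    (redSaturation M).accepts = redClosure M.accepts := by
  ext v
  change (∃ t ∈ M.accept, t ∈ (redSaturation M).eval v) ↔ ∃ u, M.eval u ∈ M.accept ∧ Red u v
  simp only [mem_eval_redSaturation]
  constructor
  · rintro ⟨_, ht, u, hu, rfl⟩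
    exact ⟨u, ht, hu⟩
  · rintro ⟨u, ht, hu⟩
    exact ⟨_, ht, u, hu, rfl⟩

theorem isRegular_redClosure {L : Language (α × Bool)} (hL : L.IsRegular) :
    (redClosure L).IsRegular := by
  obtain ⟨τ, _, M, rfl⟩ := hL
  exact accepts_redSaturation M ▸ isRegular_accepts _

section ReducedForms

variable [DecidableEq α]

theorem image_reduce_eq_redClosure_inf (L : Language (α × Bool)) :
    (reduce '' L : Language (α × Bool)) = redClosure L ⊓ {w | IsReduced w} := by
  ext w
  constructor
  · rintro ⟨u, hu, rfl⟩
    exact ⟨⟨u, hu, FreeGroup.reduce.red⟩, .of_reduce_eq FreeGroup.reduce.idem⟩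
  · rintro ⟨⟨u, hu, huw⟩, hw⟩
    exact ⟨u, hu, (FreeGroup.reduce.eq_of_red huw).trans hw.reduce_eq⟩

theorem isRegular_image_reduce [Finite α] {L : Language (α × Bool)} (hL : L.IsRegular) :
    Language.IsRegular (reduce '' L : Language (α × Bool)) :=
  image_reduce_eq_redClosure_inf L ▸ (isRegular_redClosure hL).inf (isRegular_setOf_isChain _)

end ReducedForms

theorem map_ofList_eq_of_red {N : Type*} [Monoid N] {φ : FreeMonoid (α × Bool) →* N}
    (hφ : ∀ a b, φ (FreeMonoid.of (a, b)) * φ (FreeMonoid.of (a, !b)) = 1)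
    {u v : List (α × Bool)} (huv : Red u v) :
    φ (FreeMonoid.ofList u) = φ (FreeMonoid.ofList v) := by
  induction huv with
  | refl => rfl
  | tail _ hstep ih =>
    rw [ih]
    obtain ⟨⟩ := hstep
    simp only [FreeMonoid.ofList_append, FreeMonoid.ofList_cons, map_mul]
    rw [← mul_assoc (φ (FreeMonoid.of _)), hφ, one_mul]

theorem benois_lemma_general {Y N : Type} [Finite Y] [DecidableEq Y] [Monoid N]
    (φ : FreeMonoid (Y × Bool) →* N)
    (hφ : ∀ y b, φ (FreeMonoid.of (y, b)) * φ (FreeMonoid.of (y, !b)) = 1)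
    {L : Language (Y × Bool)} (hL : L.IsRegular) :
    Language.IsRegular (reduce '' L : Language (Y × Bool)) ∧
      (∀ w ∈ reduce '' L, reduce w = w) ∧
      langImage φ (reduce '' L) = langImage φ L := by
  refine ⟨isRegular_image_reduce hL, ?_, ?_⟩
  · rintro _ ⟨u, _, rfl⟩
    exact FreeGroup.reduce.idem
  · exact (Set.image_image _ _ _).trans <|
      Set.image_congr fun u _ => (map_ofList_eq_of_red hφ FreeGroup.reduce.red).symm

/-- **Benois' Lemma.**  Let `Y` be a finite set and let `X = Y ⊔ Y⁻¹` be the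
corresponding group alphabet, realized as `Y × Bool` (with `(y, true)` the
letter `y` and `(y, false)` its formal inverse `y⁻¹`).  Let `φ : X* → G` be a
surjective monoid homomorphism sending formal inverses to inverses.  If `L` is a
regular language with `φ(L) = S`, then the language `L'` of freely reduced forms
of the words of `L` is regular, consists of freely reduced words, and satisfies
`φ(L') = S`. -/
theorem benois_lemma
    {Y : Type} [Fintype Y] [DecidableEq Y] {G : Type} [Group G]
    (φ : FreeMonoid (Y × Bool) →* G) (hφ : Function.Surjective φ)
    (hinv : ∀ (y : Y) (b : Bool),
      φ (FreeMonoid.of (y, !b)) = (φ (FreeMonoid.of (y, b)))⁻¹)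
    (L : Language (Y × Bool)) (hreg : L.IsRegular)
    (S : Set G) (hrep : langImage φ L = S) :
    Language.IsRegular ((FreeGroup.reduce '' L : Set (List (Y × Bool))) : Language (Y × Bool)) ∧
      (∀ w ∈ FreeGroup.reduce '' L, FreeGroup.reduce w = w) ∧
      langImage φ (FreeGroup.reduce '' L) = S :=
  hrep ▸ benois_lemma_general φ (fun y b => by rw [hinv, mul_inv_cancel]) hreg
end

section
/- Let A and B be nontrivial groups generated by the images of finite sets Y_A and Y_B respectively, let G = A * B, let X = Y_A ⊔ Y_B ⊔ Y_A⁻¹ ⊔ Y_B⁻¹, and let φ : X* → G be a monoid homomorphism with φ(x⁻¹) = φ(x)⁻¹ for all x ∈ X whose image generates G. Then for every g ∈ G there exists a letter x ∈ X such that the syllable length of g·φ(x) is strictly greater than the syllable length of g. -/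
/-- The element `a₁b₁⋯aₘbₘ` of the free product `A ∗ B` determined by a list of
pairs `[(a₁,b₁),…,(aₘ,bₘ)]`. -/
def altProd {A B : Type} [Group A] [Group B] (l : List (A × B)) : Monoid.Coprod A B :=
  (l.map fun p => Monoid.Coprod.inl p.1 * Monoid.Coprod.inr p.2).prod

/-- The list `[(a₁,b₁),…,(aₘ,bₘ)]` encodes a reduced factorization
`a₁b₁⋯aₘbₘ`: all `aᵢ` with `i ≥ 2` are nontrivial and all `bᵢ` with
`i ≤ m − 1` are nontrivial (while `a₁` and `bₘ` are arbitrary). -/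
def IsReducedFactorization {A B : Type} [Group A] [Group B] (l : List (A × B)) : Prop :=
  (∀ p ∈ l.tail, p.1 ≠ 1) ∧ (∀ p ∈ l.dropLast, p.2 ≠ 1)

/-- The number of syllables (nontrivial factors) of the factorization encoded by
the list `[(a₁,b₁),…,(aₘ,bₘ)]`. -/
def syllableCount {A B : Type} [Group A] [Group B] [DecidableEq A] [DecidableEq B]
    (l : List (A × B)) : ℕ :=
  (l.map Prod.fst).countP (fun a => decide (a ≠ 1)) +
    (l.map Prod.snd).countP (fun b => decide (b ≠ 1))

/-!
If a reduced factorization `a₁b₁⋯aₘbₘ` is empty or has `bₘ ≠ 1`, then multiplying by a nontrivial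
element of `A` on the right creates a new syllable; if `bₘ = 1`, any nontrivial element of `B` fills
the vacant last place. Generators of nontrivial groups cannot all be trivial, so some letter
realizes each of the two moves.
-/

theorem exists_ne_one_of_closure_range_eq_top {G : Type*} {ι : Sort*} [Group G] [Nontrivial G]
    {f : ι → G} (hf : Subgroup.closure (Set.range f) = ⊤) : ∃ i, f i ≠ 1 := by
  by_contra! h
  have hbot : Subgroup.closure (Set.range f) = ⊥ := by
    rw [Subgroup.closure_eq_bot_iff]
    rintro _ ⟨i, rfl⟩
    exact h i
  exact bot_ne_top (hbot.symm.trans hf)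

section Coprod

open Monoid.Coprod

variable {A B : Type} [Group A] [Group B]

theorem altProd_append_singleton (l : List (A × B)) (a : A) (b : B) :
    altProd (l ++ [(a, b)]) = altProd l * (inl a * inr b) := by
  simp [altProd]

theorem isReducedFactorization_append_singleton_iff {l : List (A × B)} {p : A × B} :
    IsReducedFactorization (l ++ [p]) ↔
      IsReducedFactorization l ∧ (∀ q ∈ l.getLast?, q.2 ≠ 1) ∧ (l ≠ [] → p.1 ≠ 1) := by
  rcases l.eq_nil_or_concat' with rfl | ⟨l, q, rfl⟩
  · simp [IsReducedFactorization]
  · have htail : (l ++ [q] ++ [p]).tail = (l ++ [q]).tail ++ [p] :=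
      List.tail_append_of_ne_nil (by simp)
    simp only [IsReducedFactorization, htail, List.dropLast_concat, List.forall_mem_append,
      List.forall_mem_singleton, List.getLast?_concat, Option.mem_some_iff, forall_eq', ne_eq,
      List.append_ne_nil_of_right_ne_nil _ (List.cons_ne_nil q []), not_false_eq_true,
      true_imp_iff]
    tauto

variable [DecidableEq A] [DecidableEq B]

theorem syllableCount_append_singleton (l : List (A × B)) (a : A) (b : B) :
    syllableCount (l ++ [(a, b)]) =
      syllableCount l + ((if a = 1 then 0 else 1) + if b = 1 then 0 else 1) := by
  simp only [syllableCount, List.map_append, List.map_cons, List.map_nil, List.countP_append,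
    List.countP_singleton, decide_eq_true_eq, ne_eq, ite_not]
  exact add_add_add_comm _ _ _ _

theorem exists_letter_increasing_syllable_length_general {X : Type*} (φ : X → Monoid.Coprod A B)
    (hA : ∃ a : A, a ≠ 1 ∧ inl a ∈ Set.range φ) (hB : ∃ b : B, b ≠ 1 ∧ inr b ∈ Set.range φ)
    {l : List (A × B)} (hl : IsReducedFactorization l) :
    ∃ (x : X) (l' : List (A × B)), IsReducedFactorization l' ∧ altProd l' = altProd l * φ x ∧
      syllableCount l < syllableCount l' := by
  by_cases hlast : ∀ q ∈ l.getLast?, q.2 ≠ 1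
  · obtain ⟨a, ha, x, hx⟩ := hA
    refine ⟨x, l ++ [(a, 1)],
      isReducedFactorization_append_singleton_iff.2 ⟨hl, hlast, fun _ => ha⟩, ?_, ?_⟩
    · simp [altProd_append_singleton, hx]
    · simp [syllableCount_append_singleton, ha]
  · obtain ⟨b, hb, x, hx⟩ := hB
    obtain ⟨l₀, a, rfl⟩ : ∃ l₀ a, l = l₀ ++ [(a, 1)] := by
      push Not at hlast
      obtain ⟨⟨a, _⟩, hmem, rfl⟩ := hlast
      exact ⟨l.dropLast, a, (List.dropLast_append_getLast? _ hmem).symm⟩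
    refine ⟨x, l₀ ++ [(a, b)], ?_, ?_, ?_⟩
    · rwa [isReducedFactorization_append_singleton_iff] at hl ⊢
    · simp [altProd_append_singleton, hx, mul_assoc]
    · simp [syllableCount_append_singleton, hb]

end Coprod

/-- In a free product `G = A ∗ B` of nontrivial groups, with a group alphabet
`X = Y_A ⊔ Y_B ⊔ Y_A⁻¹ ⊔ Y_B⁻¹` mapping onto generators of `A` and `B`, for every
`g ∈ G` there is a letter `x ∈ X` such that the syllable length of `g·φ(x)` is
strictly greater than the syllable length of `g`. -/
theorem exists_letter_increasing_syllable_length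
    {A B : Type} [Group A] [Group B] [Nontrivial A] [Nontrivial B]
    [DecidableEq A] [DecidableEq B]
    {YA YB : Type} [Fintype YA] [Fintype YB]
    (genA : YA → A) (genB : YB → B)
    (hgenA : Subgroup.closure (Set.range genA) = ⊤)
    (hgenB : Subgroup.closure (Set.range genB) = ⊤)
    (φ : FreeMonoid ((YA ⊕ YB) × Bool) →* Monoid.Coprod A B)
    (hφA : ∀ y : YA, φ (FreeMonoid.of (Sum.inl y, true)) = Monoid.Coprod.inl (genA y))
    (hφB : ∀ y : YB, φ (FreeMonoid.of (Sum.inr y, true)) = Monoid.Coprod.inr (genB y))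
    (hφinv : ∀ (s : YA ⊕ YB) (b : Bool),
      φ (FreeMonoid.of (s, !b)) = (φ (FreeMonoid.of (s, b)))⁻¹)
    (g : Monoid.Coprod A B) (l : List (A × B))
    (hl : IsReducedFactorization l) (hlg : altProd l = g) :
    ∃ (x : (YA ⊕ YB) × Bool) (l' : List (A × B)),
      IsReducedFactorization l' ∧ altProd l' = g * φ (FreeMonoid.of x) ∧
        syllableCount l < syllableCount l' := by
  obtain ⟨yA, hyA⟩ := exists_ne_one_of_closure_range_eq_top hgenA
  obtain ⟨yB, hyB⟩ := exists_ne_one_of_closure_range_eq_top hgenB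
  subst hlg
  exact exists_letter_increasing_syllable_length_general (φ ∘ FreeMonoid.of)
    ⟨genA yA, hyA, _, hφA yA⟩ ⟨genB yB, hyB, _, hφB yB⟩ hl
end

section
/- Let F be a free group of finite rank k ≥ 2. There exists no left-invariant linear order ≤ on F, finite alphabet X, surjective monoid homomorphism φ : X* → F, and regular language L ⊆ X* with φ(L) = {g ∈ F : 1 < g}. -/
/-!
Let `G` carry a directed left-invariant partial order whose positive cone is the image of a regular
language `L`, and let `A ⊆ G` differ from each of its right translates by finitely many elements. If
`m < z` are separated by `A`, then a word `w ∈ L` representing `m⁻¹ z` traces a path from `m` to `z`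
which crosses the boundary of `A` at one of finitely many points. By regularity, the prefix of `w`
read before the crossing can be completed to an element of `L` by one of finitely many words, so
`m` lies strictly below one of finitely many elements of `G`. Hence `A` is eventually constant
along the order.

In a free group, the set of the elements whose reduced word starts with a letter `a` is such an `A`,
but it is not eventually constant. Indeed left translations preserve the eventual properties, while
translation by a letter other than `a` and `a⁻¹` moves `A` off itself, and `a g` starts with `a`
unless `g` starts with `a⁻¹`.
-/

open Filter
open scoped Pointwise

namespace RegularPositiveCone

section RightCoboundary

/-- The coboundary of the set `A` at `t`: the elements at which right multiplication by `t` enters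
or leaves `A`, that is, the `t`-edges of the Cayley graph with exactly one end in `A`. -/
def rightCoboundary {G : Type*} [Mul G] (A : Set G) (t : G) : Set G :=
  {p | ¬(p ∈ A ↔ p * t ∈ A)}

lemma rightCoboundary_mul_subset {G : Type*} [Semigroup G] (A : Set G) (s t : G) :
    rightCoboundary A (s * t) ⊆ rightCoboundary A s ∪ (· * s) ⁻¹' rightCoboundary A t := by
  intro p hp
  simp only [rightCoboundary, Set.mem_union, Set.mem_preimage, Set.mem_ofPred_eq,
    ← mul_assoc] at hp ⊢
  tauto

lemma rightCoboundary_one {M : Type*} [MulOneClass M] (A : Set M) : rightCoboundary A 1 = ∅ := by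
  simp [rightCoboundary]

variable {G : Type*} [Group G]

lemma rightCoboundary_inv (A : Set G) (t : G) :
    rightCoboundary A t⁻¹ = (· * t⁻¹) ⁻¹' rightCoboundary A t := by
  ext p
  simp [rightCoboundary, iff_comm]

/-- The elements of `G` which stabilize `A` under right translation up to finitely many elements.
The set `A` is almost invariant in the sense of the theory of ends when this subgroup is `⊤`. -/
def almostStabilizer (A : Set G) : Subgroup G where
  carrier := {t | (rightCoboundary A t).Finite}
  one_mem' := by simp [rightCoboundary_one]
  mul_mem' {s t} hs ht :=
    (hs.union (ht.preimage (mul_left_injective s).injOn)).subset (rightCoboundary_mul_subset A s t)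
  inv_mem' {t} ht := by
    simpa only [Set.mem_ofPred_eq, rightCoboundary_inv] using
      Set.Finite.preimage (mul_left_injective t⁻¹).injOn ht

lemma mem_almostStabilizer {A : Set G} {t : G} :
    t ∈ almostStabilizer A ↔ (rightCoboundary A t).Finite :=
  Iff.rfl

end RightCoboundary

section RegularLanguage

lemma exists_prefix_mul_mem_rightCoboundary {M X : Type*} [Monoid M] (φ : FreeMonoid X →* M)
    {A : Set M} {w : List X} {y : M} (hy : y ∈ rightCoboundary A (φ (.ofList w))) :
    ∃ u x v, u ++ x :: v = w ∧ y * φ (.ofList u) ∈ rightCoboundary A (φ (.of x)) := by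
  induction w generalizing y with
  | nil => simp [rightCoboundary_one] at hy
  | cons a w ih =>
    rw [FreeMonoid.ofList_cons, map_mul] at hy
    rcases rightCoboundary_mul_subset _ _ _ hy with hya | hyw
    · exact ⟨[], a, w, rfl, by simpa using hya⟩
    · obtain ⟨u, x, v, rfl, hx⟩ := ih hyw
      exact ⟨a :: u, x, v, rfl, by rwa [FreeMonoid.ofList_cons, map_mul, ← mul_assoc]⟩

lemma exists_finite_completions {X : Type*} {L : Language X} (hL : L.IsRegular) :
    ∃ V : Set (List X), V.Finite ∧ ∀ u v, u ++ v ∈ L → ∃ v' ∈ V, u ++ v' ∈ L := by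
  have hchoice : ∀ K : Language X, ∃ v, ∀ v' ∈ K, v ∈ K := fun K ↦ by
    by_cases hK : ∃ v, v ∈ K
    · exact hK.imp fun v hv _ _ ↦ hv
    · exact ⟨[], fun v' hv' ↦ (hK ⟨v', hv'⟩).elim⟩
  choose f hf using hchoice
  exact ⟨f '' Set.range L.leftQuotient, hL.finite_range_leftQuotient.image f,
    fun u v huv ↦ ⟨_, ⟨_, ⟨u, rfl⟩, rfl⟩, hf (L.leftQuotient u) v huv⟩⟩

variable {G X : Type} [Group G] [PartialOrder G] [MulLeftMono G] [Finite X]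
  {φ : FreeMonoid X →* G} {L : Language X} {A : Set G}

lemma exists_finite_forall_separated_exists_gt (hL : L.IsRegular)
    (hφ : langImage φ L = {g | 1 < g}) (hA : almostStabilizer A = ⊤) :
    ∃ S : Set G, S.Finite ∧ ∀ y z, y < z → ¬(y ∈ A ↔ z ∈ A) → ∃ s ∈ S, y < s := by
  obtain ⟨V, hV, hcompl⟩ := exists_finite_completions hL
  have hfin (t : G) : (rightCoboundary A t).Finite :=
    mem_almostStabilizer.1 (hA ▸ Subgroup.mem_top t)
  refine ⟨⋃ x, rightCoboundary A (φ (.of x)) * langImage φ V,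
    Set.finite_iUnion fun x ↦ (hfin _).mul (hV.image _), fun y z hyz hsep ↦ ?_⟩
  obtain ⟨w, hw, hwz⟩ : y⁻¹ * z ∈ langImage φ L := by
    simpa [hφ] using hyz
  have hcross : y ∈ rightCoboundary A (φ (.ofList w)) := by
    simpa [rightCoboundary, show φ (.ofList w) = y⁻¹ * z from hwz] using hsep
  obtain ⟨u, x, v, rfl, hx⟩ := exists_prefix_mul_mem_rightCoboundary φ hcross
  obtain ⟨v', hv', huv'⟩ := hcompl u (x :: v) hw
  have hpos : 1 < φ (.ofList (u ++ v')) := hφ.subset ⟨_, huv', rfl⟩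
  refine ⟨y * φ (.ofList u) * φ (.ofList v'),
    Set.mem_iUnion.2 ⟨x, Set.mul_mem_mul hx ⟨v', hv', rfl⟩⟩, ?_⟩
  rwa [mul_assoc, ← map_mul, ← FreeMonoid.ofList_append, lt_mul_iff_one_lt_right']

theorem eventuallyConst_atTop_of_isRegular [IsDirectedOrder G] (hL : L.IsRegular)
    (hφ : langImage φ L = {g | 1 < g}) (hA : almostStabilizer A = ⊤) :
    EventuallyConst A atTop := by
  obtain ⟨S, hS, hsep⟩ := exists_finite_forall_separated_exists_gt hL hφ hA
  obtain ⟨m, hm⟩ := hS.bddAbove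
  have hconst : ∀ z ≥ m, (m ∈ A ↔ z ∈ A) := fun z hmz ↦ by
    rcases hmz.eq_or_lt with rfl | hmz
    · rfl
    · by_contra hne
      obtain ⟨s, hs, hms⟩ := hsep m z hmz hne
      exact (hm hs).not_gt hms
  exact eventuallyConst_set.2 <| (em (m ∈ A)).imp
    (fun hmA ↦ (eventually_ge_atTop m).mono fun z hz ↦ (hconst z hz).1 hmA)
    (fun hmA ↦ (eventually_ge_atTop m).mono fun z hz ↦ mt (hconst z hz).2 hmA)

end RegularLanguage

section FreeGroup

open FreeGroup

variable {α : Type*} [DecidableEq α]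

lemma toWord_mul_of_getElem?_zero {i : α} {p : FreeGroup α} (hp : p ≠ 1) (hpi : p ≠ (of i)⁻¹) :
    (p * of i).toWord[0]? = p.toWord[0]? := by
  obtain ⟨w, c, hw⟩ : ∃ w c, p.toWord = w ++ [c] := by
    simpa using (List.eq_nil_or_concat p.toWord).resolve_left (mt toWord_eq_nil_iff.1 hp)
  have hwc : IsReduced (w ++ [c]) := hw ▸ isReduced_toWord
  by_cases hc : c = (i, false)
  · have hpw : p = mk w * (of i)⁻¹ := by
      rw [← mk_toWord (x := p), hw, hc, ← mul_mk]
      rfl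
    have hw_ne : w ≠ [] := by
      rintro rfl
      exact hpi (by rw [hpw, ← one_eq_mk, one_mul])
    have hw_red : IsReduced w := hwc.infix (List.prefix_append w [c]).isInfix
    have hmul : (p * of i).toWord = w := by
      rw [hpw, inv_mul_cancel_right, toWord_mk, hw_red.reduce_eq]
    rw [hmul, hw, List.getElem?_append_left (List.length_pos_of_ne_nil hw_ne)]
  · have hci : IsReduced ([c] ++ [(i, true)]) := by
      simpa [Prod.ext_iff] using hc
    have hmul : (p * of i).toWord = w ++ [c] ++ [(i, true)] := by
      rw [toWord_mul, hw, toWord_of,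
        (hwc.append_overlap hci (List.cons_ne_nil c [])).reduce_eq]
    rw [hmul, hw, List.getElem?_append_left (by simp)]

lemma almostStabilizer_startsWith (c : α × Bool) : almostStabilizer (startsWith c) = ⊤ := by
  rw [eq_top_iff, ← closure_range_of, Subgroup.closure_le]
  rintro _ ⟨i, rfl⟩
  refine mem_almostStabilizer.2 ((Set.toFinite {1, (of i)⁻¹}).subset fun p hp ↦ ?_)
  by_contra hne
  simp only [Set.mem_insert_iff, Set.mem_singleton_iff, not_or] at hne
  simp [rightCoboundary, startsWith, toWord_mul_of_getElem?_zero hne.1 hne.2] at hp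

variable [Preorder (FreeGroup α)] [MulLeftMono (FreeGroup α)] [IsDirectedOrder (FreeGroup α)]

lemma not_eventually_atTop_mem_startsWith [Nontrivial α] (c : α × Bool) :
    ¬∀ᶠ g in atTop, g ∈ startsWith c := by
  intro hc
  obtain ⟨j, hj⟩ := exists_ne c.1
  obtain ⟨g, hg, hjg⟩ :=
    (hc.and ((OrderIso.mulLeft (mk [(j, true)])).tendsto_atTop.eventually hc)).exists
  have hne {b : Bool} : c ≠ (j, b) := fun h ↦ hj (by rw [h])
  have hg' : g ∉ startsWith (j, !true) := (startsWith.disjoint_iff_ne.2 hne).notMem_of_mem_left hg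
  exact (startsWith.disjoint_iff_ne.2 hne).notMem_of_mem_left hjg (startsWith_mk_mul g hg')

lemma not_eventuallyConst_atTop_startsWith [Nontrivial α] (c : α × Bool) :
    ¬EventuallyConst (startsWith c) atTop := by
  intro hconst
  rcases eventuallyConst_set.1 hconst with hmem | hnotMem
  · exact not_eventually_atTop_mem_startsWith c hmem
  · have hmul := (OrderIso.mulLeft (mk [c])).tendsto_atTop.eventually hnotMem
    exact not_eventually_atTop_mem_startsWith (c.1, !c.2)
      (hmul.mono fun g hg ↦ not_not.1 (mt (startsWith_mk_mul g) hg))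

end FreeGroup

end RegularPositiveCone

open RegularPositiveCone

theorem no_regular_positive_cone_in_free_group_general {α X : Type} [Nontrivial α]
    [PartialOrder (FreeGroup α)] [MulLeftMono (FreeGroup α)] [IsDirectedOrder (FreeGroup α)]
    [Finite X] (φ : FreeMonoid X →* FreeGroup α) {L : Language X} (hL : L.IsRegular) :
    langImage φ L ≠ {g | 1 < g} := by
  classical
  obtain ⟨i⟩ := ‹Nontrivial α›.to_nonempty
  exact fun hφ ↦ not_eventuallyConst_atTop_startsWith (i, true)
    (eventuallyConst_atTop_of_isRegular hL hφ (almostStabilizer_startsWith _))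

/-- No positive cone of a left-invariant linear order on a free group of finite
rank `k ≥ 2` is represented by a regular language. -/
theorem no_regular_positive_cone_in_free_group
    {k : ℕ} (hk : 2 ≤ k) :
    ¬ ∃ (lin : LinearOrder (FreeGroup (Fin k)))
        (_ : ∀ h g g' : FreeGroup (Fin k), lin.le g g' → lin.le (h * g) (h * g'))
        (X : Type) (_ : Fintype X)
        (φ : FreeMonoid X →* FreeGroup (Fin k)) (_ : Function.Surjective φ)
        (L : Language X), L.IsRegular ∧
          langImage φ L = {g : FreeGroup (Fin k) | lin.lt 1 g} := by
  rintro ⟨lin, hle, X, _, φ, -, L, hL, hφ⟩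
  have : Nontrivial (Fin k) := Fin.nontrivial_iff_two_le.2 hk
  have : MulLeftMono (FreeGroup (Fin k)) := ⟨fun h _ _ ↦ hle h _ _⟩
  exact no_regular_positive_cone_in_free_group_general φ hL hφ
end
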